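/- (Proposition B(iii), simple singular case with negative derivative.) Consider the ODE p y′ + q y = r on U = (a,b), where p, q, r ∈ C^m(U), p has a zero of order l_p at x̂ ∈ U and q a zero of order l_q at x̂ with l_p = l_q + 1 (l_p, l_q < m), p and q have no other zeros in U, and r has a zero of order l_r ≥ l_q at x̂. Let h be the C¹ extension of p/q near x̂ (h(x̂) = 0) and assume h′(x̂) < 0. Then for every n ∈ ℕ with n ≤ m − l_q and n < |h′(x̂)|^{−1}, the solutions of the ODE of class C^n(U) form a two-parameter family: for every pair of real constants (c₋, c₊) there is a unique solution of class C^n(U) agreeing on (a, x̂) with the general solution with integration constant c₋ and on (x̂, b) with the one with integration constant c₊, and every C^n(U) solution arises this way. -/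

import Mathlib

/-!
On either side of `x̂`, multiplying a solution `z` by the integrating factor `μ = e^w` gives
`(μ z)' = μ r / p` and `μ' = μ q / p`, so L'Hôpital's rule for `z = (μ z) / μ` finds the limit of
`z` at `x̂` whenever `|μ| → ∞` there, whatever the integration constant.

After division by `q` the equation reads `h z' + z = r / q`. Differentiating an equation
`h z' + e z = g` gives `h u' + (e + h') u = g' - e' z` for `u = z'`, whose integrating factor is
`μ h`. Hence `n` derivatives of `z` have limits at `x̂` as long as `|μ hⁿ| → ∞`. Since `log |μ|`
is asymptotic to `log |x - x̂| / h'(x̂)`, this holds when `1 / h'(x̂) + n < 0`, that is when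
`n < |h'(x̂)|⁻¹`. The limits agree on both sides, so any two one-sided solutions fit together.

The case `μ → 0`, `μ z → 0` of the same argument, with `h = x - x̂` and `μ = (x - x̂)^l`, shows
that a function of class `C^(n+l)` vanishing to order `l` is `(x - x̂)^l` times one of class `Cⁿ`.

Conversely, `e^w y - W` has derivative zero on either side of `x̂` for a solution `y`. For `n = 0`
a point where `y` is not differentiable passes for a solution point if `q y = r` there; that such
a `y` is still a general solution follows because `e^w y - W` has an image of measure zero.
-/

/- Statement 18 (Proposition B(iii), simple singular case, negative derivative):
if l_p = l_q + 1, l_r ≥ l_q and the C¹ extension h of p/q has h(x̂) = 0, h'(x̂) < 0,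
then for every n ≤ m - l_q with n < |h'(x̂)|⁻¹ the C^n solutions of p y' + q y = r
form a two-parameter family, parametrized by the integration constants on the two
sides of x̂. -/

open Set

namespace SingularODE18

/-- `g` has a zero of order `l` at `xh`. -/
def HasZeroOfOrder (g : ℝ → ℝ) (xh : ℝ) (l : ℕ) : Prop :=
  (∀ k < l, iteratedDeriv k g xh = 0) ∧ iteratedDeriv l g xh ≠ 0

open Filter Topology Asymptotics MeasureTheory

theorem abs_sub_le_mul_abs_sub_of_abs_deriv_le {f f' g g' : ℝ → ℝ} {c x ε : ℝ}
    (hf : ∀ t ∈ uIcc c x, HasDerivAt f (f' t) t) (hg : ∀ t ∈ uIcc c x, HasDerivAt g (g' t) t)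
    (hg' : ∀ t ∈ uIcc c x, g' t ≠ 0) (hle : ∀ t ∈ uIcc c x, |f' t| ≤ ε * |g' t|) :
    |f x - f c| ≤ ε * |g x - g c| := by
  wlog hcx : c ≤ x generalizing c x
  · rw [abs_sub_comm (f x), abs_sub_comm (g x)]
    rw [uIcc_comm] at hf hg hg' hle
    exact this hf hg hg' hle (le_of_not_ge hcx)
  obtain rfl | hlt := hcx.eq_or_lt
  · simp
  rw [uIcc_of_le hcx] at hf hg hg' hle
  obtain ⟨t, ht, heq⟩ := exists_ratio_hasDerivAt_eq_ratio_slope f f' hlt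
    (HasDerivAt.continuousOn hf) (fun t ht => hf t (Ioo_subset_Icc_self ht)) g g'
    (HasDerivAt.continuousOn hg) (fun t ht => hg t (Ioo_subset_Icc_self ht))
  have ht' := Ioo_subset_Icc_self ht
  refine le_of_mul_le_mul_right ?_ (abs_pos.2 (hg' t ht'))
  calc |f x - f c| * |g' t| = |g x - g c| * |f' t| := by rw [← abs_mul, ← heq, abs_mul]
    _ ≤ |g x - g c| * (ε * |g' t|) := by gcongr; exact hle t ht'
    _ = ε * |g x - g c| * |g' t| := by ring

theorem isLittleO_of_deriv_isLittleO {l : Filter ℝ} [NeBot l] [TendstoIxxClass Icc l l]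
    {f f' g g' : ℝ → ℝ} (hf : ∀ᶠ x in l, HasDerivAt f (f' x) x)
    (hg : ∀ᶠ x in l, HasDerivAt g (g' x) x) (hg' : ∀ᶠ x in l, g' x ≠ 0)
    (hgtop : Tendsto (fun x => |g x|) l atTop) (h : f' =o[l] g') : f =o[l] g := by
  refine isLittleO_iff.2 fun ε hε => ?_
  have hnear := ((hf.and hg).and (hg'.and (h.def (half_pos hε)))).smallSets
  obtain ⟨c, hc⟩ := ((tendsto_fst.uIcc tendsto_snd).eventually hnear).curry.exists
  filter_upwards [hc, hgtop.eventually_ge_atTop (2 / ε * |f c| + |g c|)] with x hx hgx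
  have hincr : |f x - f c| ≤ ε / 2 * |g x - g c| :=
    abs_sub_le_mul_abs_sub_of_abs_deriv_le (fun t ht => (hx t ht).1.1) (fun t ht => (hx t ht).1.2)
      (fun t ht => (hx t ht).2.1) fun t ht => (hx t ht).2.2
  calc |f x| ≤ |f c| + |f x - f c| := by linarith [abs_sub_abs_le_abs_sub (f x) (f c)]
    _ ≤ |f c| + ε / 2 * (|g x| + |g c|) := by
      gcongr
      exact hincr.trans (by gcongr; exact abs_sub _ _)
    _ = ε / 2 * (2 / ε * |f c| + |g c|) + ε / 2 * |g x| := by field_simp; ring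
    _ ≤ ε / 2 * |g x| + ε / 2 * |g x| := by gcongr
    _ = ε * |g x| := by ring

theorem tendsto_div_nhdsNE_of_tendsto_deriv_div {a L : ℝ} {f f' g g' : ℝ → ℝ}
    (hf : ∀ᶠ x in 𝓝[≠] a, HasDerivAt f (f' x) x) (hg : ∀ᶠ x in 𝓝[≠] a, HasDerivAt g (g' x) x)
    (hg' : ∀ᶠ x in 𝓝[≠] a, g' x ≠ 0) (hgtop : Tendsto (fun x => |g x|) (𝓝[≠] a) atTop)
    (hdiv : Tendsto (fun x => f' x / g' x) (𝓝[≠] a) (𝓝 L)) :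
    Tendsto (fun x => f x / g x) (𝓝[≠] a) (𝓝 L) := by
  have hsub : ∀ᶠ x in 𝓝[≠] a, HasDerivAt (fun x => f x - L * g x) (f' x - L * g' x) x := by
    filter_upwards [hf, hg] with x hfx hgx using hfx.sub (hgx.const_mul L)
  have hsub' : (fun x => f' x - L * g' x) =o[𝓝[≠] a] g' := by
    rw [isLittleO_iff_tendsto' (hg'.mono fun x hx h0 => absurd h0 hx), ← sub_self L]
    refine (hdiv.sub_const L).congr' (hg'.mono fun x hx => ?_)
    field_simp
  have hlittle : (fun x => f x - L * g x) =o[𝓝[≠] a] g := by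
    simp only [← Iio_union_Ioi, nhdsWithin_union, tendsto_sup, eventually_sup, isLittleO_sup] at *
    exact ⟨isLittleO_of_deriv_isLittleO hsub.1 hg.1 hg'.1 hgtop.1 hsub'.1,
      isLittleO_of_deriv_isLittleO hsub.2 hg.2 hg'.2 hgtop.2 hsub'.2⟩
  have hg0 : ∀ᶠ x in 𝓝[≠] a, g x ≠ 0 :=
    (hgtop.eventually_gt_atTop 0).mono fun x hx => abs_pos.1 hx
  rw [isLittleO_iff_tendsto' (hg0.mono fun x hx h0 => absurd h0 hx)] at hlittle
  refine (zero_add L ▸ hlittle.add_const L).congr' (hg0.mono fun x hx => ?_)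
  field_simp
  ring

theorem hasDerivAt_of_eventually_hasDerivAt_nhdsNE {y y' : ℝ → ℝ} {x₀ : ℝ}
    (hy : ContinuousAt y x₀) (hy' : ContinuousAt y' x₀)
    (hderiv : ∀ᶠ x in 𝓝[≠] x₀, HasDerivAt y (y' x) x) : HasDerivAt y (y' x₀) x₀ := by
  refine hasDerivAt_iff_tendsto_slope.2 ?_
  have hslope : slope y x₀ = fun x => (y x - y x₀) / (x - x₀) :=
    funext fun x => slope_def_field y x₀ x
  rw [hslope]
  refine HasDerivAt.lhopital_zero_nhdsNE (hderiv.mono fun x hx => hx.sub_const _)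
    (.of_forall fun x => (hasDerivAt_id' x).sub_const _) (.of_forall fun _ => one_ne_zero)
    ?_ ?_ (by simpa using hy'.tendsto.mono_left nhdsWithin_le_nhds)
  · simpa using (hy.tendsto.sub_const (y x₀)).mono_left nhdsWithin_le_nhds
  · simpa using ((continuous_sub_right x₀).tendsto x₀).mono_left nhdsWithin_le_nhds

theorem diff_singleton_mem_nhdsNE {U : Set ℝ} {x₀ : ℝ} (hU : U ∈ 𝓝 x₀) : U \ {x₀} ∈ 𝓝[≠] x₀ :=
  sdiff_mem_nhdsWithin_compl hU {x₀}

theorem contDiffOn_succ_of_hasDerivAt_diff_singleton {U : Set ℝ} {x₀ : ℝ} {y y' : ℝ → ℝ} {n : ℕ}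
    (hU : IsOpen U) (hy : ContinuousOn y U) (hy' : ContDiffOn ℝ n y' U)
    (hderiv : ∀ x ∈ U \ {x₀}, HasDerivAt y (y' x) x) : ContDiffOn ℝ (n + 1) y U := by
  have hall : ∀ x ∈ U, HasDerivAt y (y' x) x := by
    intro x hx
    obtain rfl | hne := eq_or_ne x x₀
    · have hUx := hU.mem_nhds hx
      exact hasDerivAt_of_eventually_hasDerivAt_nhdsNE (hy.continuousAt hUx)
        (hy'.continuousOn.continuousAt hUx)
        (eventually_of_mem (diff_singleton_mem_nhdsNE hUx) hderiv)
    · exact hderiv x ⟨hx, hne⟩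
  refine (contDiffOn_succ_iff_deriv_of_isOpen hU).2
    ⟨fun x hx => (hall x hx).differentiableAt.differentiableWithinAt, by simp,
      hy'.congr fun x hx => (hall x hx).deriv⟩

/-- `z` solves `p z' + q z = r` on `s`. The equation is solved for `z'`, so differentiability is
part of the notion; it is used for `p` without zeros in `s`. -/
def IsLinearODESolution (p q r : ℝ → ℝ) (s : Set ℝ) (z : ℝ → ℝ) : Prop :=
  ∀ x ∈ s, HasDerivAt z ((r x - q x * z x) / p x) x

/-- `μ` is an integrating factor on `s` of the equations `p z' + q z = r`: it has no zeros and
`μ' / μ = q / p`. -/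
def IsIntegratingFactor (p q : ℝ → ℝ) (s : Set ℝ) (μ : ℝ → ℝ) : Prop :=
  ∀ x ∈ s, μ x ≠ 0 ∧ HasDerivAt μ (μ x * (q x / p x)) x

section LinearODE

variable {h h' e e' g g' μ z : ℝ → ℝ} {s : Set ℝ}

theorem IsIntegratingFactor.hasDerivAt_mul {x : ℝ} (hμ : IsIntegratingFactor h e s μ)
    (hz : IsLinearODESolution h e g s z) (hx : x ∈ s) :
    HasDerivAt (fun x => μ x * z x) (μ x * (g x / h x)) x :=
  ((hμ x hx).2.mul (hz x hx)).congr_deriv (by ring)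

theorem IsIntegratingFactor.mul_deriv (hμ : IsIntegratingFactor h e s μ)
    (hh : ∀ x ∈ s, HasDerivAt h (h' x) x) (hne : ∀ x ∈ s, h x ≠ 0) :
    IsIntegratingFactor h (fun x => e x + h' x) s (fun x => μ x * h x) := fun x hx =>
  ⟨mul_ne_zero (hμ x hx).1 (hne x hx), ((hμ x hx).2.mul (hh x hx)).congr_deriv (by
    field_simp [hne x hx])⟩

theorem IsLinearODESolution.deriv (hz : IsLinearODESolution h e g s z)
    (hh : ∀ x ∈ s, HasDerivAt h (h' x) x) (hne : ∀ x ∈ s, h x ≠ 0)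
    (he : ∀ x ∈ s, HasDerivAt e (e' x) x) (hg : ∀ x ∈ s, HasDerivAt g (g' x) x) :
    IsLinearODESolution h (fun x => e x + h' x) (fun x => g' x - e' x * z x) s
      (fun x => (g x - e x * z x) / h x) := fun x hx =>
  (((hg x hx).fun_sub ((he x hx).fun_mul (hz x hx))).fun_div (hh x hx) (hne x hx)).congr_deriv (by
    have := hne x hx
    field_simp
    ring)

end LinearODE

/-- One of the two cases of L'Hôpital's rule for `z = (μ z) / μ` at `x₀`, in a form that survives
`n` passages from `μ` to `μ h` when `h` vanishes at `x₀`: either `|μ hⁿ| → ∞`, or `μ` and `μ z`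
both tend to zero. -/
def LHopitalCase (h : ℝ → ℝ) (x₀ : ℝ) (n : ℕ) (μ z : ℝ → ℝ) : Prop :=
  Tendsto (fun x => |μ x * h x ^ n|) (𝓝[≠] x₀) atTop ∨
    Tendsto μ (𝓝[≠] x₀) (𝓝 0) ∧ Tendsto (fun x => μ x * z x) (𝓝[≠] x₀) (𝓝 0)

namespace LHopitalCase

variable {h e g μ z : ℝ → ℝ} {x₀ : ℝ} {n : ℕ} {s : Set ℝ}

theorem of_succ (hcase : LHopitalCase h x₀ (n + 1) μ z) (hh : Tendsto h (𝓝[≠] x₀) (𝓝 0)) :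
    LHopitalCase h x₀ n μ z := by
  refine hcase.imp_left fun htop => tendsto_atTop_mono' _ ?_ htop
  filter_upwards [(tendsto_zero_iff_abs_tendsto_zero h).1 hh |>.eventually_le_const one_pos]
    with x hx
  calc |μ x * h x ^ (n + 1)| = |μ x * h x ^ n| * |h x| := by rw [← abs_mul, pow_succ, mul_assoc]
    _ ≤ |μ x * h x ^ n| := mul_le_of_le_one_right (abs_nonneg _) hx

theorem deriv {L M : ℝ} (hcase : LHopitalCase h x₀ (n + 1) μ z)
    (hh : Tendsto h (𝓝[≠] x₀) (𝓝 0)) (hne : ∀ᶠ x in 𝓝[≠] x₀, h x ≠ 0)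
    (he : Tendsto e (𝓝[≠] x₀) (𝓝 L)) (hg : Tendsto g (𝓝[≠] x₀) (𝓝 M)) :
    LHopitalCase h x₀ n (fun x => μ x * h x) (fun x => (g x - e x * z x) / h x) := by
  refine hcase.imp (fun htop => ?_) fun ⟨hμ, hμz⟩ => ⟨by simpa using hμ.mul hh, ?_⟩
  · simpa only [mul_assoc, pow_succ'] using htop
  · have hlim : Tendsto (fun x => μ x * g x - e x * (μ x * z x)) (𝓝[≠] x₀) (𝓝 0) := by
      simpa using (hμ.mul hg).sub (he.mul hμz)
    refine hlim.congr' (hne.mono fun x hx => ?_)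
    field_simp

theorem tendsto (hcase : LHopitalCase h x₀ 0 μ z) (hs : s ∈ 𝓝[≠] x₀)
    (hz : IsLinearODESolution h e g s z) (hμ : IsIntegratingFactor h e s μ)
    (hne : ∀ x ∈ s, h x ≠ 0) (he : ContinuousAt e x₀) (hg : ContinuousAt g x₀) (he0 : e x₀ ≠ 0) :
    Tendsto z (𝓝[≠] x₀) (𝓝 (g x₀ / e x₀)) := by
  have hderivμz : ∀ᶠ x in 𝓝[≠] x₀, HasDerivAt (fun x => μ x * z x) (μ x * (g x / h x)) x :=
    eventually_of_mem hs fun x hx => hμ.hasDerivAt_mul hz hx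
  have hderivμ : ∀ᶠ x in 𝓝[≠] x₀, HasDerivAt μ (μ x * (e x / h x)) x :=
    eventually_of_mem hs fun x hx => (hμ x hx).2
  have he_ne : ∀ᶠ x in 𝓝[≠] x₀, e x ≠ 0 := (he.eventually_ne he0).filter_mono nhdsWithin_le_nhds
  have hderiv_ne : ∀ᶠ x in 𝓝[≠] x₀, μ x * (e x / h x) ≠ 0 := by
    filter_upwards [hs, he_ne] with x hx hex
    exact mul_ne_zero (hμ x hx).1 (div_ne_zero hex (hne x hx))
  have hratio : Tendsto (fun x => μ x * (g x / h x) / (μ x * (e x / h x))) (𝓝[≠] x₀)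
      (𝓝 (g x₀ / e x₀)) := by
    refine ((hg.div he he0).tendsto.mono_left nhdsWithin_le_nhds).congr' ?_
    filter_upwards [hs] with x hx
    rw [mul_div_mul_left _ _ (hμ x hx).1, div_div_div_cancel_right₀ (hne x hx), Pi.div_apply]
  have hquot : Tendsto (fun x => μ x * z x / μ x) (𝓝[≠] x₀) (𝓝 (g x₀ / e x₀)) := by
    rcases hcase with htop | ⟨hμ0, hμz0⟩
    · exact tendsto_div_nhdsNE_of_tendsto_deriv_div hderivμz hderivμ hderiv_ne
        (by simpa using htop) hratio
    · exact HasDerivAt.lhopital_zero_nhdsNE hderivμz hderivμ hderiv_ne hμz0 hμ0 hratio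
  exact hquot.congr' (eventually_of_mem hs fun x hx => mul_div_cancel_left₀ _ (hμ x hx).1)

end LHopitalCase

theorem exists_continuousOn_eqOn_of_tendsto {U : Set ℝ} {x₀ L : ℝ} {z : ℝ → ℝ}
    (hz : ContinuousOn z (U \ {x₀})) (hlim : Tendsto z (𝓝[≠] x₀) (𝓝 L)) :
    ∃ y, ContinuousOn y U ∧ EqOn y z (U \ {x₀}) ∧ y x₀ = L :=
  ⟨Function.update z x₀ L, continuousOn_update_iff.2
    ⟨hz, fun _ => hlim.mono_left (nhdsWithin_mono _ fun _ hx => hx.2)⟩,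
    fun _ hx => Function.update_of_ne hx.2 _ _, Function.update_self ..⟩

theorem exists_contDiffOn_eqOn_of_lHopitalCase {U : Set ℝ} {x₀ : ℝ} {h : ℝ → ℝ} (hU : IsOpen U)
    (hx₀ : x₀ ∈ U) (hh0 : h x₀ = 0) (hne : ∀ x ∈ U \ {x₀}, h x ≠ 0) (n : ℕ) {e g μ z : ℝ → ℝ}
    (hh : ContDiffOn ℝ n h U) (he : ContDiffOn ℝ n e U) (hg : ContDiffOn ℝ n g U)
    (hz : IsLinearODESolution h e g (U \ {x₀}) z) (hμ : IsIntegratingFactor h e (U \ {x₀}) μ)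
    (hcase : LHopitalCase h x₀ n μ z) (hindex : ∀ k ≤ n, e x₀ + k * deriv h x₀ ≠ 0) :
    ∃ y, ContDiffOn ℝ n y U ∧ EqOn y z (U \ {x₀}) ∧ y x₀ = g x₀ / e x₀ := by
  have hUx := hU.mem_nhds hx₀
  have hpunct := diff_singleton_mem_nhdsNE hUx
  induction n generalizing e g μ z with
  | zero =>
    simpa only [CharP.cast_eq_zero, contDiffOn_zero] using exists_continuousOn_eqOn_of_tendsto
      (HasDerivAt.continuousOn hz) (hcase.tendsto hpunct hz hμ hne
        (he.continuousOn.continuousAt hUx) (hg.continuousOn.continuousAt hUx)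
        (by simpa using hindex 0 le_rfl))
  | succ n ih =>
    have hlow {f : ℝ → ℝ} (hf : ContDiffOn ℝ (n + 1 : ℕ) f U) : ContDiffOn ℝ n f U :=
      hf.of_le (mod_cast n.le_succ)
    have hderivC {f : ℝ → ℝ} (hf : ContDiffOn ℝ (n + 1 : ℕ) f U) : ContDiffOn ℝ n (deriv f) U :=
      hf.deriv_of_isOpen hU (by simp)
    have hderiv {f : ℝ → ℝ} (hf : ContDiffOn ℝ (n + 1 : ℕ) f U) :
        ∀ x ∈ U \ {x₀}, HasDerivAt f (deriv f x) x := fun x hx =>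
      ((hf.differentiableOn (by simp)).differentiableAt (hU.mem_nhds hx.1)).hasDerivAt
    have hlim {f : ℝ → ℝ} (hf : ContDiffOn ℝ (n + 1 : ℕ) f U) : Tendsto f (𝓝[≠] x₀) (𝓝 (f x₀)) :=
      (hf.continuousOn.continuousAt hUx).tendsto.mono_left nhdsWithin_le_nhds
    have hhlim : Tendsto h (𝓝[≠] x₀) (𝓝 0) := hh0 ▸ hlim hh
    obtain ⟨y, hyC, hyz, hyx₀⟩ := ih (hlow hh) (hlow he) (hlow hg) hz hμ (hcase.of_succ hhlim)
      fun k hk => hindex k (hk.trans n.le_succ)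
    have hz' : IsLinearODESolution h (fun x => e x + deriv h x)
        (fun x => deriv g x - deriv e x * y x) (U \ {x₀}) fun x => (g x - e x * z x) / h x := by
      intro x hx
      simpa only [hyz hx] using hz.deriv (hderiv hh) hne (hderiv he) (hderiv hg) x hx
    obtain ⟨y', hyC', hyz', -⟩ := ih (hlow hh) ((hlow he).add (hderivC hh))
      ((hderivC hg).sub ((hderivC he).mul hyC)) hz' (hμ.mul_deriv (hderiv hh) hne)
      (hcase.deriv hhlim (eventually_of_mem hpunct hne) (hlim he) (hlim hg)) fun k hk => by
        simpa [add_mul, add_assoc, add_comm] using hindex (k + 1) (Nat.succ_le_succ hk)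
    refine ⟨y, ?_, hyz, hyx₀⟩
    exact_mod_cast contDiffOn_succ_of_hasDerivAt_diff_singleton hU hyC.continuousOn hyC'
      fun x hx => by
        rw [hyz' hx]
        exact (hz x hx).congr_of_eventuallyEq
          (hyz.eventuallyEq_of_mem ((hU.sdiff isClosed_singleton).mem_nhds hx))

theorem exists_contDiffOn_eqOn_pow_succ_mul {U : Set ℝ} {x₀ : ℝ} (hU : IsOpen U) (hx₀ : x₀ ∈ U)
    {n l : ℕ} {f G : ℝ → ℝ} (hG : ContDiffOn ℝ n G U)
    (hf : ∀ x ∈ U, HasDerivAt f ((x - x₀) ^ l * G x) x) (hf0 : f x₀ = 0) :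
    ∃ F, ContDiffOn ℝ n F U ∧ EqOn f (fun x => (x - x₀) ^ (l + 1) * F x) U ∧
      F x₀ = G x₀ / (l + 1) := by
  have hsub_ne : ∀ x ∈ U \ {x₀}, x - x₀ ≠ 0 := fun x hx => sub_ne_zero.2 hx.2
  have hpow (x : ℝ) : HasDerivAt (fun x => (x - x₀) ^ (l + 1)) ((l + 1) * (x - x₀) ^ l) x := by
    simpa using ((hasDerivAt_id' x).sub_const x₀).fun_pow (l + 1)
  have hz : IsLinearODESolution (fun x => x - x₀) (fun _ => l + 1) G (U \ {x₀})
      fun x => f x / (x - x₀) ^ (l + 1) := fun x hx =>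
    ((hf x hx.1).fun_div (hpow x) (pow_ne_zero _ (hsub_ne x hx))).congr_deriv (by
      field_simp [hsub_ne x hx]
      ring)
  have hμ : IsIntegratingFactor (fun x => x - x₀) (fun _ => l + 1) (U \ {x₀})
      fun x => (x - x₀) ^ (l + 1) := fun x hx =>
    ⟨pow_ne_zero _ (hsub_ne x hx), (hpow x).congr_deriv (by field_simp [hsub_ne x hx]; ring)⟩
  have hcase : LHopitalCase (fun x => x - x₀) x₀ n (fun x => (x - x₀) ^ (l + 1))
      fun x => f x / (x - x₀) ^ (l + 1) := by
    refine .inr ⟨?_, ?_⟩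
    · simpa using (hpow x₀).continuousAt.tendsto.mono_left nhdsWithin_le_nhds
    · refine (hf0 ▸ (hf x₀ hx₀).continuousAt.tendsto.mono_left nhdsWithin_le_nhds).congr'
        (eventually_mem_nhdsWithin.mono fun x hx => ?_)
      exact (mul_div_cancel₀ _ (pow_ne_zero _ (sub_ne_zero.2 hx))).symm
  obtain ⟨F, hFC, hFf, hFx₀⟩ := exists_contDiffOn_eqOn_of_lHopitalCase (h := fun x => x - x₀) hU hx₀
    (sub_self x₀) hsub_ne n (contDiffOn_id.sub contDiffOn_const) contDiffOn_const hG hz hμ hcase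
    fun k _ => by
      simp only [deriv_sub_const, deriv_id'']
      positivity
  refine ⟨F, hFC, fun x hx => ?_, hFx₀⟩
  obtain rfl | hne := eq_or_ne x x₀
  · simp [hf0]
  · simp only [hFf ⟨hx, hne⟩]
    exact (mul_div_cancel₀ _ (pow_ne_zero _ (sub_ne_zero.2 hne))).symm

theorem exists_contDiffOn_eqOn_pow_mul {U : Set ℝ} {x₀ : ℝ} (hU : IsOpen U) (hx₀ : x₀ ∈ U)
    (n l : ℕ) {f : ℝ → ℝ} (hf : ContDiffOn ℝ (n + l : ℕ) f U)
    (hf0 : ∀ k < l, iteratedDeriv k f x₀ = 0) :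
    ∃ F, ContDiffOn ℝ n F U ∧ EqOn f (fun x => (x - x₀) ^ l * F x) U ∧
      F x₀ = iteratedDeriv l f x₀ / l.factorial := by
  induction l generalizing f with
  | zero => exact ⟨f, hf, fun x _ => by simp, by simp⟩
  | succ l ih =>
    obtain ⟨G, hGC, hfG, hGx₀⟩ := ih (f := deriv f)
      (hf.deriv_of_isOpen hU (mod_cast (add_assoc n l 1).le)) fun k hk => by
        simpa [iteratedDeriv_succ'] using hf0 (k + 1) (Nat.succ_lt_succ hk)
    have hderiv : ∀ x ∈ U, HasDerivAt f ((x - x₀) ^ l * G x) x := fun x hx =>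
      ((hf.differentiableOn (by simp)).differentiableAt (hU.mem_nhds hx)).hasDerivAt.congr_deriv
        (hfG hx)
    obtain ⟨F, hFC, hfF, hFx₀⟩ := exists_contDiffOn_eqOn_pow_succ_mul hU hx₀ hGC hderiv
      (by simpa using hf0 0 l.succ_pos)
    refine ⟨F, hFC, hfF, ?_⟩
    rw [hFx₀, hGx₀, iteratedDeriv_succ', div_div, Nat.factorial_succ, Nat.cast_mul, Nat.cast_succ,
      mul_comm]

theorem exists_contDiffOn_eqOn_div {U : Set ℝ} {x₀ : ℝ} {n l : ℕ} {f q : ℝ → ℝ} (hU : IsOpen U)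
    (hx₀ : x₀ ∈ U) (hf : ContDiffOn ℝ (n + l : ℕ) f U) (hq : ContDiffOn ℝ (n + l : ℕ) q U)
    (hf0 : ∀ k < l, iteratedDeriv k f x₀ = 0) (hq0 : HasZeroOfOrder q x₀ l)
    (hq_ne : ∀ x ∈ U \ {x₀}, q x ≠ 0) :
    ∃ F, ContDiffOn ℝ n F U ∧ EqOn F (fun x => f x / q x) (U \ {x₀}) := by
  obtain ⟨F, hFC, hF, -⟩ := exists_contDiffOn_eqOn_pow_mul hU hx₀ n l hf hf0
  obtain ⟨Q, hQC, hQ, hQx₀⟩ := exists_contDiffOn_eqOn_pow_mul hU hx₀ n l hq hq0.1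
  have hQ_ne : ∀ x ∈ U, Q x ≠ 0 := by
    intro x hx
    obtain rfl | hne := eq_or_ne x x₀
    · rw [hQx₀]
      exact div_ne_zero hq0.2 (by positivity)
    · exact right_ne_zero_of_mul (hQ hx ▸ hq_ne x ⟨hx, hne⟩)
  refine ⟨fun x => F x / Q x, hFC.div hQC hQ_ne, fun x hx => ?_⟩
  simp only [hF hx.1, hQ hx.1, mul_div_mul_left _ _ (pow_ne_zero l (sub_ne_zero.2 hx.2))]

theorem eqOn_of_eqOn_diff_singleton {U : Set ℝ} {x₀ : ℝ} {y₁ y₂ : ℝ → ℝ} (hU : U ∈ 𝓝 x₀)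
    (hy₁ : ContinuousAt y₁ x₀) (hy₂ : ContinuousAt y₂ x₀) (heq : EqOn y₁ y₂ (U \ {x₀})) :
    EqOn y₁ y₂ U := by
  have hx₀ : y₁ x₀ = y₂ x₀ := ((hy₁.eventuallyEq_nhds_iff_eventuallyEq_nhdsNE hy₂).1
    (heq.eventuallyEq_of_mem (diff_singleton_mem_nhdsNE hU))).eq_of_nhds
  intro x hx
  obtain rfl | hne := eq_or_ne x x₀
  exacts [hx₀, heq ⟨hx, hne⟩]

theorem tendsto_log_sub_nhdsNE (x₀ : ℝ) :
    Tendsto (fun x => Real.log (x - x₀)) (𝓝[≠] x₀) atBot := by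
  refine Real.tendsto_log_nhdsNE_zero.comp (tendsto_nhdsWithin_iff.2 ⟨?_, ?_⟩)
  · simpa using ((continuous_sub_right x₀).tendsto x₀).mono_left nhdsWithin_le_nhds
  · exact eventually_mem_nhdsWithin.mono fun x hx => sub_ne_zero.2 hx

theorem tendsto_div_sub_of_hasDerivAt {h : ℝ → ℝ} {x₀ d : ℝ} (hh : HasDerivAt h d x₀)
    (hh0 : h x₀ = 0) : Tendsto (fun x => h x / (x - x₀)) (𝓝[≠] x₀) (𝓝 d) := by
  refine (hasDerivAt_iff_tendsto_slope.1 hh).congr fun x => ?_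
  rw [slope_def_field, hh0, sub_zero]

theorem tendsto_log_div_log_of_hasDerivAt {h : ℝ → ℝ} {x₀ d : ℝ} (hh : HasDerivAt h d x₀)
    (hh0 : h x₀ = 0) (hd : d ≠ 0) :
    Tendsto (fun x => Real.log (h x) / Real.log (x - x₀)) (𝓝[≠] x₀) (𝓝 1) := by
  have hlogtop := tendsto_log_sub_nhdsNE x₀
  have hquot := tendsto_div_sub_of_hasDerivAt hh hh0
  have hsum := ((hquot.log hd).div_atBot hlogtop).add_const 1
  rw [zero_add] at hsum
  refine hsum.congr' ?_
  filter_upwards [hquot.eventually_ne hd, hlogtop.eventually_lt_atBot 0] with x hx hlog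
  obtain ⟨hhx, hsub⟩ := div_ne_zero_iff.1 hx
  rw [Real.log_div hhx hsub, sub_div, div_self hlog.ne, sub_add_cancel]

theorem IsIntegratingFactor.tendsto_log_div_log {h e μ : ℝ → ℝ} {x₀ d : ℝ} {s : Set ℝ}
    (hμ : IsIntegratingFactor h e s μ) (hs : s ∈ 𝓝[≠] x₀) (he : ContinuousAt e x₀)
    (hh : HasDerivAt h d x₀) (hh0 : h x₀ = 0) (hd : d ≠ 0) :
    Tendsto (fun x => Real.log (μ x) / Real.log (x - x₀)) (𝓝[≠] x₀) (𝓝 (e x₀ / d)) := by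
  have hsub : ∀ᶠ x in 𝓝[≠] x₀, x - x₀ ≠ 0 :=
    eventually_mem_nhdsWithin.mono fun x hx => sub_ne_zero.2 hx
  refine tendsto_div_nhdsNE_of_tendsto_deriv_div (f' := fun x => e x / h x)
    (g' := fun x => (x - x₀)⁻¹) ?_ ?_ (hsub.mono fun x hx => inv_ne_zero hx)
    (tendsto_abs_atBot_atTop.comp (tendsto_log_sub_nhdsNE x₀)) ?_
  · filter_upwards [hs] with x hx
    simpa [mul_div_cancel_left₀ _ (hμ x hx).1] using (hμ x hx).2.log (hμ x hx).1
  · filter_upwards [hsub] with x hx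
    simpa using ((hasDerivAt_id' x).sub_const x₀).log hx
  · have hquot := (he.tendsto.mono_left nhdsWithin_le_nhds).div
      (tendsto_div_sub_of_hasDerivAt hh hh0) hd
    refine hquot.congr fun x => ?_
    simp only [Pi.div_apply, div_inv_eq_mul, div_div_eq_mul_div, mul_div_right_comm]

theorem tendsto_abs_atTop_of_tendsto_log_div_log {f : ℝ → ℝ} {x₀ L : ℝ} (hL : L < 0)
    (hne : ∀ᶠ x in 𝓝[≠] x₀, f x ≠ 0)
    (hf : Tendsto (fun x => Real.log (f x) / Real.log (x - x₀)) (𝓝[≠] x₀) (𝓝 L)) :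
    Tendsto (fun x => |f x|) (𝓝[≠] x₀) atTop := by
  have hlogtop := tendsto_log_sub_nhdsNE x₀
  have hlogf : Tendsto (fun x => Real.log (f x)) (𝓝[≠] x₀) atTop := by
    refine (hf.neg_mul_atBot hL hlogtop).congr' ?_
    exact (hlogtop.eventually_lt_atBot 0).mono fun x hx => div_mul_cancel₀ _ hx.ne
  refine (Real.tendsto_exp_atTop.comp hlogf).congr' (hne.mono fun x hx => ?_)
  exact Real.exp_log_eq_abs hx

theorem IsIntegratingFactor.lHopitalCase {h e μ : ℝ → ℝ} {x₀ d : ℝ} {n : ℕ} {s : Set ℝ}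
    (hμ : IsIntegratingFactor h e s μ) (hs : s ∈ 𝓝[≠] x₀) (he : ContinuousAt e x₀)
    (hh : HasDerivAt h d x₀) (hh0 : h x₀ = 0) (hd : d < 0) (hindex : 0 < e x₀ + n * d)
    (z : ℝ → ℝ) : LHopitalCase h x₀ n μ z := by
  have hne : ∀ᶠ x in 𝓝[≠] x₀, μ x ≠ 0 ∧ h x ^ n ≠ 0 := by
    filter_upwards [hs, (tendsto_div_sub_of_hasDerivAt hh hh0).eventually_ne hd.ne] with x hx hhx
    exact ⟨(hμ x hx).1, pow_ne_zero n (div_ne_zero_iff.1 hhx).1⟩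
  refine .inl (tendsto_abs_atTop_of_tendsto_log_div_log (L := e x₀ / d + n * 1) ?_
    (hne.mono fun x hx => mul_ne_zero hx.1 hx.2) ?_)
  · rw [mul_one, div_add' _ _ _ hd.ne]
    exact div_neg_of_pos_of_neg hindex hd
  · refine ((hμ.tendsto_log_div_log hs he hh hh0 hd.ne).add
      ((tendsto_log_div_log_of_hasDerivAt hh hh0 hd.ne).const_mul (n : ℝ))).congr'
      (hne.mono fun x hx => ?_)
    simp only [Real.log_mul hx.1 hx.2, Real.log_pow, add_div, mul_div_assoc]

theorem subsingleton_of_isPreconnected_of_volume_eq_zero {s : Set ℝ} (hs : IsPreconnected s)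
    (hvol : volume s = 0) : s.Subsingleton := by
  by_contra hnot
  obtain ⟨α, hα, β, hβ, hlt⟩ := (not_subsingleton_iff.1 hnot).exists_lt
  have hIcc := measure_mono_null (hs.Icc_subset hα hβ) hvol
  rw [Real.volume_Icc, ENNReal.ofReal_eq_zero] at hIcc
  linarith

theorem volume_image_eq_zero_of_hasDerivWithinAt_zero {u : ℝ → ℝ} {s : Set ℝ}
    (hu : ∀ x ∈ s, HasDerivWithinAt u 0 s x) : volume (u '' s) = 0 :=
  addHaar_image_eq_zero_of_det_fderivWithin_eq_zero volume
    (fun x hx => (hu x hx).hasFDerivWithinAt) (by simp)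

theorem eqOn_zero_of_hasDerivAt_ne_zero {φ : ℝ → ℝ} {α β : ℝ} (hφ : ContinuousOn φ (Icc α β))
    (hα : φ α = 0) (hβ : φ β = 0)
    (hderiv : ∀ t ∈ Ioo α β, φ t ≠ 0 → ∃ φ', φ' ≠ 0 ∧ HasDerivAt φ φ' t) :
    EqOn φ 0 (Icc α β) := by
  intro x hx
  obtain ⟨t, ht, hmax⟩ := isCompact_Icc.exists_isMaxOn ⟨x, hx⟩ (hφ.pow 2)
  have ht0 : φ t = 0 := by
    by_contra hne
    have ht' : t ∈ Ioo α β :=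
      ⟨ht.1.lt_of_ne fun h => hne (h ▸ hα), ht.2.lt_of_ne fun h => hne (h ▸ hβ)⟩
    obtain ⟨φ', hφ', hφt⟩ := hderiv t ht' hne
    have hcrit := (hmax.isLocalMax (Icc_mem_nhds ht'.1 ht'.2)).hasDerivAt_eq_zero (hφt.pow 2)
    simp_all
  have hle : φ x ^ 2 ≤ φ t ^ 2 := hmax hx
  simpa [ht0] using hle

section JunkDerivative

variable {u ψ ψ' : ℝ → ℝ} {s : Set ℝ}

theorem subsingleton_setOf_eq_of_deriv_eq_zero (hs : s.OrdConnected) (hu : ContinuousOn u s)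
    (hu' : ∀ x ∈ s, deriv u x = 0) (hdiff : ∀ x ∈ s, u x ≠ ψ x → DifferentiableAt ℝ u x)
    (hψ : ∀ x ∈ s, HasDerivAt ψ (ψ' x) x) (hψ' : ∀ x ∈ s, ψ' x ≠ 0) :
    {x ∈ s | u x = ψ x}.Subsingleton := by
  by_contra hnot
  obtain ⟨α, ⟨hαs, hα⟩, β, ⟨hβs, hβ⟩, hlt⟩ := (not_subsingleton_iff.1 hnot).exists_lt
  have hsub := hs.out hαs hβs
  have heq : EqOn (fun x => u x - ψ x) 0 (Icc α β) := by
    refine eqOn_zero_of_hasDerivAt_ne_zero ((hu.mono hsub).sub fun x hx =>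
      (hψ x (hsub hx)).continuousAt.continuousWithinAt) (sub_eq_zero.2 hα) (sub_eq_zero.2 hβ) ?_
    intro t ht hne
    have hts := hsub (Ioo_subset_Icc_self ht)
    have hut := (hdiff t hts (sub_ne_zero.1 hne)).hasDerivAt
    exact ⟨_, by simpa [hu' t hts] using hψ' t hts, hut.sub (hψ t hts)⟩
  obtain ⟨t, ht⟩ := nonempty_Ioo.2 hlt
  have hts := hsub (Ioo_subset_Icc_self ht)
  have hnear : u =ᶠ[𝓝 t] ψ := by
    filter_upwards [Icc_mem_nhds ht.1 ht.2] with x hx using sub_eq_zero.1 (heq hx)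
  exact hψ' t hts (by rw [← (hψ t hts).deriv, ← hnear.deriv_eq, hu' t hts])

theorem hasDerivWithinAt_zero_setOf_eq_of_deriv_eq_zero (hs : IsOpen s) (hu : ContinuousOn u s)
    (hu' : ∀ x ∈ s, deriv u x = 0) (hdiff : ∀ x ∈ s, u x ≠ ψ x → DifferentiableAt ℝ u x)
    (hψ : ∀ x ∈ s, HasDerivAt ψ (ψ' x) x) (hψ' : ContinuousOn ψ' s) {x : ℝ}
    (hx : x ∈ {x ∈ s | u x = ψ x}) : HasDerivWithinAt u 0 {x ∈ s | u x = ψ x} x := by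
  by_cases h0 : ψ' x = 0
  · exact h0 ▸ (hψ x hx.1).hasDerivWithinAt.congr (fun t ht => ht.2) hx.2
  · have hne : {t ∈ s | ψ' t ≠ 0} ∈ 𝓝 x :=
      inter_mem (hs.mem_nhds hx.1) ((hψ'.continuousAt (hs.mem_nhds hx.1)).eventually_ne h0)
    obtain ⟨c, d, hxI, hI⟩ := mem_nhds_iff_exists_Ioo_subset.1 hne
    have hsingle := subsingleton_setOf_eq_of_deriv_eq_zero ordConnected_Ioo
      (hu.mono fun t ht => (hI ht).1) (fun t ht => hu' t (hI ht).1)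
      (fun t ht => hdiff t (hI ht).1) (fun t ht => hψ t (hI ht).1) fun t ht => (hI ht).2
    refine (hasDerivWithinAt_inter (Ioo_mem_nhds hxI.1 hxI.2)).1
      (hasDerivWithinAt_iff_hasFDerivWithinAt.2 (.of_subsingleton (hsingle.anti ?_)))
    exact fun t ht => ⟨ht.2, ht.1.2⟩

-- Sard's argument: `u` has derivative zero both relative to `{u = ψ}` and off it, so it maps `s` to
-- a null set.
theorem exists_eqOn_const_of_deriv_eq_zero (hs : IsOpen s) (hconn : IsPreconnected s)
    (hu : ContinuousOn u s) (hu' : ∀ x ∈ s, deriv u x = 0)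
    (hdiff : ∀ x ∈ s, u x ≠ ψ x → DifferentiableAt ℝ u x)
    (hψ : ∀ x ∈ s, HasDerivAt ψ (ψ' x) x) (hψ' : ContinuousOn ψ' s) :
    ∃ c, EqOn u (fun _ => c) s := by
  have hvol_eq : volume (u '' {x ∈ s | u x = ψ x}) = 0 :=
    volume_image_eq_zero_of_hasDerivWithinAt_zero fun x hx =>
      hasDerivWithinAt_zero_setOf_eq_of_deriv_eq_zero hs hu hu' hdiff hψ hψ' hx
  have hvol_ne : volume (u '' {x ∈ s | u x ≠ ψ x}) = 0 :=
    volume_image_eq_zero_of_hasDerivWithinAt_zero fun x hx =>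
      (hu' x hx.1 ▸ (hdiff x hx.1 hx.2).hasDerivAt).hasDerivWithinAt
  have hsplit : s = {x ∈ s | u x = ψ x} ∪ {x ∈ s | u x ≠ ψ x} := by
    ext x
    simp [← and_or_left, em]
  have hvol : volume (u '' s) = 0 := by
    rw [hsplit, image_union]
    exact measure_union_null hvol_eq hvol_ne
  have hsub := subsingleton_of_isPreconnected_of_volume_eq_zero (hconn.image u hu) hvol
  rcases s.eq_empty_or_nonempty with rfl | ⟨x, hx⟩
  · exact ⟨0, eqOn_empty _ _⟩
  · exact ⟨u x, fun t ht => hsub (mem_image_of_mem u ht) (mem_image_of_mem u hx)⟩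

end JunkDerivative

theorem hasDerivAt_piecewise_Iio {F : ℝ → ℝ → ℝ} {f g : ℝ → ℝ} {U : Set ℝ} {x₀ : ℝ}
    (hf : ∀ x ∈ U ∩ Iio x₀, HasDerivAt f (F x (f x)) x)
    (hg : ∀ x ∈ U ∩ Ioi x₀, HasDerivAt g (F x (g x)) x) {x : ℝ} (hx : x ∈ U \ {x₀}) :
    HasDerivAt ((Iio x₀).piecewise f g) (F x ((Iio x₀).piecewise f g x)) x := by
  rcases lt_or_gt_of_ne hx.2 with hlt | hgt
  · have heq : (Iio x₀).piecewise f g =ᶠ[𝓝 x] f :=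
      (piecewise_eqOn _ f g).eventuallyEq_of_mem (Iio_mem_nhds hlt)
    rw [heq.eq_of_nhds]
    exact (hf x ⟨hx.1, hlt⟩).congr_of_eventuallyEq heq
  · have heq : (Iio x₀).piecewise f g =ᶠ[𝓝 x] g :=
      (piecewise_eqOn_compl _ f g).eventuallyEq_of_mem
        (mem_of_superset (Ioi_mem_nhds hgt) fun t ht => notMem_Iio.2 (mem_Ioi.1 ht).le)
    rw [heq.eq_of_nhds]
    exact (hg x ⟨hx.1, hgt⟩).congr_of_eventuallyEq heq

theorem IsIntegratingFactor.piecewise_Iio {μm μp p q : ℝ → ℝ} {U : Set ℝ} {x₀ : ℝ}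
    (hμm : IsIntegratingFactor p q (U ∩ Iio x₀) μm)
    (hμp : IsIntegratingFactor p q (U ∩ Ioi x₀) μp) :
    IsIntegratingFactor p q (U \ {x₀}) ((Iio x₀).piecewise μm μp) := by
  refine fun x hx => ⟨?_, hasDerivAt_piecewise_Iio (F := fun x y => y * (q x / p x))
    (fun x hx => (hμm x hx).2) (fun x hx => (hμp x hx).2) hx⟩
  rcases lt_or_gt_of_ne hx.2 with hlt | hgt
  · rw [piecewise_eq_of_mem _ _ _ (mem_Iio.2 hlt)]
    exact (hμm x ⟨hx.1, hlt⟩).1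
  · rw [piecewise_eq_of_notMem _ _ _ (notMem_Iio.2 hgt.le)]
    exact (hμp x ⟨hx.1, hgt⟩).1

section Quotients

variable {p q r h g μ z : ℝ → ℝ} {s : Set ℝ}

theorem IsLinearODESolution.div (hz : IsLinearODESolution p q r s z) (hq : ∀ x ∈ s, q x ≠ 0)
    (hh : EqOn h (fun x => p x / q x) s) (hg : EqOn g (fun x => r x / q x) s) :
    IsLinearODESolution h (fun _ => 1) g s z := fun x hx => (hz x hx).congr_deriv (by
  have := hq x hx
  rw [hh hx, hg hx]
  field_simp)

theorem IsIntegratingFactor.div (hμ : IsIntegratingFactor p q s μ)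
    (hh : EqOn h (fun x => p x / q x) s) : IsIntegratingFactor h (fun _ => 1) s μ := fun x hx =>
  ⟨(hμ x hx).1, by simpa only [hh hx, one_div_div] using (hμ x hx).2⟩

end Quotients

section GeneralSolution

variable {p q r w W : ℝ → ℝ} {s : Set ℝ}

/-- The general solution `e^{-w} (W + c)` of `p y' + q y = r`, where `w` and `W` are antiderivatives
of `q / p` and `e^w r / p`. -/
noncomputable def generalSolution (w W : ℝ → ℝ) (c : ℝ) : ℝ → ℝ :=
  fun x => Real.exp (-(w x)) * (W x + c)

theorem isIntegratingFactor_exp (hw : ∀ x ∈ s, HasDerivAt w (q x / p x) x) :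
    IsIntegratingFactor p q s fun x => Real.exp (w x) := fun x hx =>
  ⟨Real.exp_ne_zero _, (hw x hx).exp⟩

theorem isLinearODESolution_generalSolution (hw : ∀ x ∈ s, HasDerivAt w (q x / p x) x)
    (hW : ∀ x ∈ s, HasDerivAt W (Real.exp (w x) * r x / p x) x) (c : ℝ) :
    IsLinearODESolution p q r s (generalSolution w W c) := fun x hx =>
  ((hw x hx).fun_neg.exp.fun_mul ((hW x hx).add_const c)).congr_deriv (by
    rw [generalSolution, Real.exp_neg]
    field_simp
    ring)

theorem eq_generalSolution_iff {x y c : ℝ} :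
    y = generalSolution w W c x ↔ Real.exp (w x) * y - W x = c := by
  rw [generalSolution, Real.exp_neg, ← div_eq_inv_mul, eq_div_iff (Real.exp_ne_zero _),
    sub_eq_iff_eq_add', mul_comm]

-- At a point where `y` is not differentiable, `deriv y` is zero by convention and the equation
-- degenerates to `y = r / q`; a solution of class `C⁰` may a priori have such points.
theorem differentiableAt_of_ne_div {x : ℝ} {y : ℝ → ℝ} (hq : q x ≠ 0)
    (hode : p x * deriv y x + q x * y x = r x) (hne : y x ≠ r x / q x) :
    DifferentiableAt ℝ y x := by
  contrapose hne
  rw [deriv_zero_of_not_differentiableAt hne, mul_zero, zero_add] at hode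
  rw [eq_div_iff hq, mul_comm, hode]

theorem deriv_exp_mul_sub_eq_zero {x : ℝ} {y : ℝ → ℝ} (hp : p x ≠ 0)
    (hw : HasDerivAt w (q x / p x) x) (hW : HasDerivAt W (Real.exp (w x) * r x / p x) x)
    (hode : p x * deriv y x + q x * y x = r x) :
    deriv (fun x => Real.exp (w x) * y x - W x) x = 0 := by
  by_cases hu : DifferentiableAt ℝ (fun x => Real.exp (w x) * y x - W x) x
  · have hy : DifferentiableAt ℝ y x := by
      have hdiv := (hu.fun_add hW.differentiableAt).fun_div hw.exp.differentiableAt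
        (Real.exp_ne_zero _)
      simpa only [sub_add_cancel, mul_div_cancel_left₀ _ (Real.exp_ne_zero _)] using hdiv
    rw [((hw.exp.fun_mul hy.hasDerivAt).fun_sub hW).deriv, ← hode]
    field_simp
    ring
  · exact deriv_zero_of_not_differentiableAt hu

theorem exists_eqOn_generalSolution {y : ℝ → ℝ} (hs : IsOpen s) (hconn : IsPreconnected s)
    (hp : ∀ x ∈ s, p x ≠ 0) (hq : ∀ x ∈ s, q x ≠ 0) (hrq : ContDiffOn ℝ 1 (fun x => r x / q x) s)
    (hw : ∀ x ∈ s, HasDerivAt w (q x / p x) x)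
    (hW : ∀ x ∈ s, HasDerivAt W (Real.exp (w x) * r x / p x) x) (hy : ContinuousOn y s)
    (hode : ∀ x ∈ s, p x * deriv y x + q x * y x = r x) :
    ∃ c, EqOn y (generalSolution w W c) s := by
  have hwc : ContinuousOn w s := HasDerivAt.continuousOn hw
  have hWc : ContinuousOn W s := HasDerivAt.continuousOn hW
  have hψ : ∀ x ∈ s, HasDerivAt (fun x => Real.exp (w x) * (r x / q x) - W x)
      (Real.exp (w x) * deriv (fun x => r x / q x) x) x := fun x hx => by
    have hrqx := ((hrq.differentiableOn one_ne_zero).differentiableAt (hs.mem_nhds hx)).hasDerivAt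
    refine (((hw x hx).exp.fun_mul hrqx).fun_sub (hW x hx)).congr_deriv ?_
    have := hp x hx
    have := hq x hx
    field_simp
    ring
  have hψ' := hwc.rexp.mul (hrq.continuousOn_deriv_of_isOpen hs le_rfl)
  have hdiff : ∀ x ∈ s, Real.exp (w x) * y x - W x ≠ Real.exp (w x) * (r x / q x) - W x →
      DifferentiableAt ℝ (fun x => Real.exp (w x) * y x - W x) x := fun x hx hne => by
    have hy_ne : y x ≠ r x / q x := fun heq => hne (by rw [heq])
    exact ((hw x hx).exp.differentiableAt.mul
      (differentiableAt_of_ne_div (hq x hx) (hode x hx) hy_ne)).sub (hW x hx).differentiableAt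
  obtain ⟨c, hc⟩ := exists_eqOn_const_of_deriv_eq_zero hs hconn ((hwc.rexp.mul hy).sub hWc)
    (fun x hx => deriv_exp_mul_sub_eq_zero (hp x hx) (hw x hx) (hW x hx) (hode x hx)) hdiff hψ hψ'
  exact ⟨c, fun x hx => eq_generalSolution_iff.2 (hc hx)⟩

end GeneralSolution

/-- `y` is a solution of class `Cⁿ` on `U` of the equation `p y' + q y = r`, singular at `x₀`, which
agrees with `zm` to the left of `x₀` and with `zp` to the right. -/
def IsSolutionAgreeingWith (n : ℕ) (p q r : ℝ → ℝ) (U : Set ℝ) (x₀ : ℝ) (zm zp y : ℝ → ℝ) : Prop :=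
  ContDiffOn ℝ n y U ∧ (∀ x ∈ U, x ≠ x₀ → p x * deriv y x + q x * y x = r x) ∧
    EqOn y zm (U ∩ Iio x₀) ∧ EqOn y zp (U ∩ Ioi x₀)

theorem IsSolutionAgreeingWith.eqOn {n : ℕ} {p q r zm zp y y' : ℝ → ℝ} {U : Set ℝ} {x₀ : ℝ}
    (hU : U ∈ 𝓝 x₀) (hy : IsSolutionAgreeingWith n p q r U x₀ zm zp y)
    (hy' : IsSolutionAgreeingWith n p q r U x₀ zm zp y') : EqOn y y' U := by
  obtain ⟨hyC, -, hym, hyp⟩ := hy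
  obtain ⟨hyC', -, hym', hyp'⟩ := hy'
  refine eqOn_of_eqOn_diff_singleton hU (hyC.continuousOn.continuousAt hU)
    (hyC'.continuousOn.continuousAt hU) fun x hx => ?_
  rcases lt_or_gt_of_ne hx.2 with hlt | hgt
  · exact (hym ⟨hx.1, hlt⟩).trans (hym' ⟨hx.1, hlt⟩).symm
  · exact (hyp ⟨hx.1, hgt⟩).trans (hyp' ⟨hx.1, hgt⟩).symm

theorem isSolutionAgreeingWith_of_eqOn_piecewise {n : ℕ} {p q r zm zp y : ℝ → ℝ} {U : Set ℝ}
    {x₀ : ℝ} (hU : IsOpen U) (hp : ∀ x ∈ U \ {x₀}, p x ≠ 0)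
    (hz : IsLinearODESolution p q r (U \ {x₀}) ((Iio x₀).piecewise zm zp))
    (hyC : ContDiffOn ℝ n y U) (hyz : EqOn y ((Iio x₀).piecewise zm zp) (U \ {x₀})) :
    IsSolutionAgreeingWith n p q r U x₀ zm zp y := by
  refine ⟨hyC, fun x hx hne => ?_, fun x hx => ?_, fun x hx => ?_⟩
  · have hnear := hyz.eventuallyEq_of_mem ((hU.sdiff isClosed_singleton).mem_nhds ⟨hx, hne⟩)
    rw [((hz x ⟨hx, hne⟩).congr_of_eventuallyEq hnear).deriv, hnear.eq_of_nhds,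
      mul_div_cancel₀ _ (hp x ⟨hx, hne⟩), sub_add_cancel]
  · rw [hyz ⟨hx.1, hx.2.ne⟩, piecewise_eq_of_mem _ _ _ hx.2]
  · rw [hyz ⟨hx.1, hx.2.ne'⟩, piecewise_eq_of_notMem _ _ _ (notMem_Iio.2 (mem_Ioi.1 hx.2).le)]

theorem exists_isSolutionAgreeingWith {n l : ℕ} {p q r h zm zp μm μp : ℝ → ℝ} {U : Set ℝ}
    {x₀ : ℝ} (hU : IsOpen U) (hx₀ : x₀ ∈ U) (hpC : ContDiffOn ℝ (n + l : ℕ) p U)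
    (hqC : ContDiffOn ℝ (n + l : ℕ) q U) (hrC : ContDiffOn ℝ (n + l : ℕ) r U)
    (hp0 : ∀ k < l, iteratedDeriv k p x₀ = 0) (hq0 : HasZeroOfOrder q x₀ l)
    (hr0 : ∀ k < l, iteratedDeriv k r x₀ = 0) (hp : ∀ x ∈ U \ {x₀}, p x ≠ 0)
    (hq : ∀ x ∈ U \ {x₀}, q x ≠ 0) (hh : EqOn h (fun x => p x / q x) (U \ {x₀}))
    (hh0 : h x₀ = 0) (hh' : deriv h x₀ < 0) (hn : 0 < 1 + n * deriv h x₀)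
    (hzm : IsLinearODESolution p q r (U ∩ Iio x₀) zm)
    (hzp : IsLinearODESolution p q r (U ∩ Ioi x₀) zp)
    (hμm : IsIntegratingFactor p q (U ∩ Iio x₀) μm)
    (hμp : IsIntegratingFactor p q (U ∩ Ioi x₀) μp) :
    ∃ y, IsSolutionAgreeingWith n p q r U x₀ zm zp y := by
  have hUx := hU.mem_nhds hx₀
  have hhd : HasDerivAt h (deriv h x₀) x₀ :=
    (differentiableAt_of_deriv_ne_zero hh'.ne).hasDerivAt
  obtain ⟨H, hHC, hH⟩ := exists_contDiffOn_eqOn_div hU hx₀ hpC hqC hp0 hq0 hq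
  obtain ⟨g, hgC, hg⟩ := exists_contDiffOn_eqOn_div hU hx₀ hrC hqC hr0 hq0 hq
  have hhC : ContDiffOn ℝ n h U := hHC.congr <| eqOn_of_eqOn_diff_singleton hUx
    hhd.continuousAt (hHC.continuousOn.continuousAt hUx) (hh.trans hH.symm)
  have hne : ∀ x ∈ U \ {x₀}, h x ≠ 0 := fun x hx => by
    rw [hh hx]
    exact div_ne_zero (hp x hx) (hq x hx)
  have hz : IsLinearODESolution p q r (U \ {x₀}) ((Iio x₀).piecewise zm zp) := fun x hx =>
    hasDerivAt_piecewise_Iio (F := fun x y => (r x - q x * y) / p x) hzm hzp hx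
  have hμ := (hμm.piecewise_Iio hμp).div hh
  have hcase := hμ.lHopitalCase (diff_singleton_mem_nhdsNE hUx) continuousAt_const hhd hh0 hh' hn
    ((Iio x₀).piecewise zm zp)
  obtain ⟨y, hyC, hyz, -⟩ := exists_contDiffOn_eqOn_of_lHopitalCase hU hx₀ hh0 hne n hhC
    contDiffOn_const hgC (hz.div hq hh hg) hμ hcase fun k hk => by
      have hkn : n * deriv h x₀ ≤ k * deriv h x₀ :=
        mul_le_mul_of_nonpos_right (mod_cast hk) hh'.le
      linarith
  exact ⟨y, isSolutionAgreeingWith_of_eqOn_piecewise hU hp hz hyC hyz⟩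

theorem two_parameter_family_general {U : Set ℝ} {x₀ : ℝ} {m : ℕ∞} {l : ℕ} {p q r h : ℝ → ℝ}
    {wm Wm wp Wp : ℝ → ℝ} (hU : IsOpen U) (hUc : U.OrdConnected) (hx₀ : x₀ ∈ U)
    (hpC : ContDiffOn ℝ m p U) (hqC : ContDiffOn ℝ m q U) (hrC : ContDiffOn ℝ m r U) (hlm : l < m)
    (hp0 : ∀ k < l, iteratedDeriv k p x₀ = 0) (hq0 : HasZeroOfOrder q x₀ l)
    (hr0 : ∀ k < l, iteratedDeriv k r x₀ = 0) (hp : ∀ x ∈ U \ {x₀}, p x ≠ 0)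
    (hq : ∀ x ∈ U \ {x₀}, q x ≠ 0) (hh : EqOn h (fun x => p x / q x) (U \ {x₀}))
    (hh0 : h x₀ = 0) (hh' : deriv h x₀ < 0)
    (hwm : ∀ x ∈ U ∩ Iio x₀, HasDerivAt wm (q x / p x) x)
    (hWm : ∀ x ∈ U ∩ Iio x₀, HasDerivAt Wm (Real.exp (wm x) * r x / p x) x)
    (hwp : ∀ x ∈ U ∩ Ioi x₀, HasDerivAt wp (q x / p x) x)
    (hWp : ∀ x ∈ U ∩ Ioi x₀, HasDerivAt Wp (Real.exp (wp x) * r x / p x) x)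
    {n : ℕ} (hnm : (n : ℕ∞) ≤ m - l) (hn : (n : ℝ) < |deriv h x₀|⁻¹) :
    (∀ cm cp,
      (∃ y, IsSolutionAgreeingWith n p q r U x₀ (generalSolution wm Wm cm)
        (generalSolution wp Wp cp) y) ∧
      ∀ y y', IsSolutionAgreeingWith n p q r U x₀ (generalSolution wm Wm cm)
          (generalSolution wp Wp cp) y →
        IsSolutionAgreeingWith n p q r U x₀ (generalSolution wm Wm cm)
          (generalSolution wp Wp cp) y' → EqOn y y' U) ∧
    ∀ y, ContDiffOn ℝ n y U → (∀ x ∈ U, x ≠ x₀ → p x * deriv y x + q x * y x = r x) →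
      ∃ cm cp, EqOn y (generalSolution wm Wm cm) (U ∩ Iio x₀) ∧
        EqOn y (generalSolution wp Wp cp) (U ∩ Ioi x₀) := by
  have hnl : ((n + l : ℕ) : WithTop ℕ∞) ≤ m := by
    have : ((n + l : ℕ) : ℕ∞) ≤ m := by
      push_cast
      exact (add_le_add_left hnm _).trans (tsub_add_cancel_of_le hlm.le).le
    exact_mod_cast this
  have hm : (1 : WithTop ℕ∞) ≤ m := by
    exact_mod_cast Order.one_le_iff_pos.2 (hlm.trans_le' zero_le)
  have hn' : 0 < 1 + n * deriv h x₀ := by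
    rw [abs_of_neg hh', ← one_div, lt_div_iff₀ (neg_pos.2 hh')] at hn
    linarith
  refine ⟨fun cm cp => ⟨?_, fun y y' hy hy' => hy.eqOn (hU.mem_nhds hx₀) hy'⟩,
    fun y hyC hode => ?_⟩
  · exact exists_isSolutionAgreeingWith hU hx₀ (hpC.of_le hnl) (hqC.of_le hnl) (hrC.of_le hnl)
      hp0 hq0 hr0 hp hq hh hh0 hh' hn' (isLinearODESolution_generalSolution hwm hWm cm)
      (isLinearODESolution_generalSolution hwp hWp cp) (isIntegratingFactor_exp hwm)
      (isIntegratingFactor_exp hwp)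
  · have hside : ∀ J : Set ℝ, IsOpen J → J.OrdConnected → x₀ ∉ J → ∀ w W : ℝ → ℝ,
        (∀ x ∈ U ∩ J, HasDerivAt w (q x / p x) x) →
        (∀ x ∈ U ∩ J, HasDerivAt W (Real.exp (w x) * r x / p x) x) →
        ∃ c, EqOn y (generalSolution w W c) (U ∩ J) := by
      intro J hJ hJc hxJ w W hw hW
      have hsub : U ∩ J ⊆ U \ {x₀} := fun x hx => ⟨hx.1, fun h => hxJ (h ▸ hx.2)⟩
      exact exists_eqOn_generalSolution (hU.inter hJ) (hUc.inter hJc).isPreconnected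
        (fun x hx => hp x (hsub hx)) (fun x hx => hq x (hsub hx))
        (((hrC.of_le hm).mono inter_subset_left).div ((hqC.of_le hm).mono inter_subset_left)
          fun x hx => hq x (hsub hx)) hw hW (hyC.continuousOn.mono inter_subset_left)
        fun x hx => hode x hx.1 (hsub hx).2
    obtain ⟨cm, hcm⟩ := hside (Iio x₀) isOpen_Iio ordConnected_Iio self_notMem_Iio wm Wm hwm hWm
    obtain ⟨cp, hcp⟩ := hside (Ioi x₀) isOpen_Ioi ordConnected_Ioi self_notMem_Ioi wp Wp hwp hWp
    exact ⟨cm, cp, hcm, hcp⟩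

/-- **Proposition B(iii).** -/
theorem two_parameter_family
    (a b xh : ℝ) (hx : xh ∈ Ioo a b) (m : ℕ∞)
    (p q r : ℝ → ℝ) (lp lq lr : ℕ)
    (hpC : ContDiffOn ℝ m p (Ioo a b))
    (hqC : ContDiffOn ℝ m q (Ioo a b))
    (hrC : ContDiffOn ℝ m r (Ioo a b))
    (hlpm : (lp : ℕ∞) < m) (hlqm : (lq : ℕ∞) < m)
    (hzp : HasZeroOfOrder p xh lp)
    (hzq : HasZeroOfOrder q xh lq)
    (hzr : HasZeroOfOrder r xh lr)
    (hnop : ∀ x ∈ Ioo a b, x ≠ xh → p x ≠ 0)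
    (hnoq : ∀ x ∈ Ioo a b, x ≠ xh → q x ≠ 0)
    (hl : lp = lq + 1) (hlr : lq ≤ lr)
    (h : ℝ → ℝ)
    (hhC : ContDiffOn ℝ 1 h (Ioo a b))
    (hhq : ∀ x ∈ Ioo a b, q x ≠ 0 → h x = p x / q x)
    (hh0 : h xh = 0)
    (hh' : deriv h xh < 0) :
    -- for any antiderivatives `w∓, W∓` giving the general solution on the two sides:
    ∀ wm Wm wp Wp : ℝ → ℝ,
      (∀ x ∈ Ioo a xh, HasDerivAt wm (q x / p x) x) →
      (∀ x ∈ Ioo a xh, HasDerivAt Wm (Real.exp (wm x) * r x / p x) x) →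
      (∀ x ∈ Ioo xh b, HasDerivAt wp (q x / p x) x) →
      (∀ x ∈ Ioo xh b, HasDerivAt Wp (Real.exp (wp x) * r x / p x) x) →
      ∀ n : ℕ, (n : ℕ∞) ≤ m - lq → (n : ℝ) < |deriv h xh|⁻¹ →
        -- every pair of integration constants gives exactly one C^n solution:
        (∀ cm cp : ℝ,
          (∃ y : ℝ → ℝ,
            ContDiffOn ℝ n y (Ioo a b) ∧
            (∀ x ∈ Ioo a b, x ≠ xh → p x * deriv y x + q x * y x = r x) ∧
            EqOn y (fun x => Real.exp (-(wm x)) * (Wm x + cm)) (Ioo a xh) ∧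
            EqOn y (fun x => Real.exp (-(wp x)) * (Wp x + cp)) (Ioo xh b)) ∧
          (∀ y y' : ℝ → ℝ,
            (ContDiffOn ℝ n y (Ioo a b) ∧
              (∀ x ∈ Ioo a b, x ≠ xh → p x * deriv y x + q x * y x = r x) ∧
              EqOn y (fun x => Real.exp (-(wm x)) * (Wm x + cm)) (Ioo a xh) ∧
              EqOn y (fun x => Real.exp (-(wp x)) * (Wp x + cp)) (Ioo xh b)) →
            (ContDiffOn ℝ n y' (Ioo a b) ∧
              (∀ x ∈ Ioo a b, x ≠ xh → p x * deriv y' x + q x * y' x = r x) ∧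
              EqOn y' (fun x => Real.exp (-(wm x)) * (Wm x + cm)) (Ioo a xh) ∧
              EqOn y' (fun x => Real.exp (-(wp x)) * (Wp x + cp)) (Ioo xh b)) →
            EqOn y y' (Ioo a b))) ∧
        -- and every C^n solution arises this way:
        (∀ y : ℝ → ℝ, ContDiffOn ℝ n y (Ioo a b) →
          (∀ x ∈ Ioo a b, x ≠ xh → p x * deriv y x + q x * y x = r x) →
          ∃ cm cp : ℝ,
            EqOn y (fun x => Real.exp (-(wm x)) * (Wm x + cm)) (Ioo a xh) ∧
            EqOn y (fun x => Real.exp (-(wp x)) * (Wp x + cp)) (Ioo xh b)) := by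
  intro wm Wm wp Wp hwm hWm hwp hWp n hnm hn
  have hleft : Ioo a xh = Ioo a b ∩ Iio xh := by rw [Ioo_inter_Iio, min_eq_right hx.2.le]
  have hright : Ioo xh b = Ioo a b ∩ Ioi xh := by rw [Ioo_inter_Ioi, max_eq_right hx.1.le]
  simp only [hleft, hright] at hwm hWm hwp hWp ⊢
  exact two_parameter_family_general isOpen_Ioo ordConnected_Ioo hx hpC hqC hrC hlqm
    (fun k hk => hzp.1 k (by lia)) hzq (fun k hk => hzr.1 k (by lia))
    (fun x hxU => hnop x hxU.1 hxU.2) (fun x hxU => hnoq x hxU.1 hxU.2)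
    (fun x hxU => hhq x hxU.1 (hnoq x hxU.1 hxU.2)) hh0 hh' hwm hWm hwp hWp hnm hn

end SingularODE18
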